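/- Let S be a uniquely ergodic continuous map of a compact metric space Y, and let ν be the unique S-invariant Borel probability measure on Y. Assume that the measure-theoretic dynamical system (Y,ν,S) has quasi-discrete spectrum. Then for every multiplicative function u : ℕ → ℂ with |u(n)| ≤ 1 for all n, every continuous f : Y → ℂ with ∫_Y f dν = 0, and every y ∈ Y, one has (1/N) Σ_{n ≤ N} f(Sⁿy) u(n) → 0 as N → ∞. -/

import Mathlib

open MeasureTheory Filter

/-- `c` is an eigenvalue of `T` w.r.t. `μ`: there is a nonzero `f ∈ L²(μ)` with
`f ∘ T = c · f` a.e. -/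
def IsEigenvalue {X : Type*} [MeasurableSpace X] (T : X → X) (μ : Measure X) (c : ℂ) : Prop :=
  ∃ f : X → ℂ, MemLp f 2 μ ∧ ¬ (f =ᵐ[μ] 0) ∧
    (fun x => f (T x)) =ᵐ[μ] (fun x => c * f x)

/-- The quasi-eigenfunction groups `E_k(T)`: `E₀(T)` consists of the constant functions of
modulus 1 whose value is an eigenvalue of `T`, and
`E_k(T) = {f measurable, |f| = 1 a.e., (f ∘ T)/f ∈ E_{k-1}(T)}`. -/
def quasiEigenfunctions {X : Type*} [MeasurableSpace X] (T : X → X) (μ : Measure X) :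
    ℕ → Set (X → ℂ)
  | 0 => {f | ∃ c : ℂ, ‖c‖ = 1 ∧ IsEigenvalue T μ c ∧ f = fun _ => c}
  | (k+1) => {f | Measurable f ∧ (∀ᵐ x ∂μ, ‖f x‖ = 1) ∧
      (fun x => f (T x) / f x) ∈ quasiEigenfunctions T μ k}

/-- `T` is totally ergodic: every nonzero power of `T` is ergodic. -/
def TotallyErgodic {X : Type*} [MeasurableSpace X] (T : X → X) (μ : Measure X) : Prop :=
  ∀ m : ℕ, m ≠ 0 → Ergodic (T^[m]) μ

/-- `(X,μ,T)` has quasi-discrete spectrum: it is totally ergodic and the linear span of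
the quasi-eigenfunctions `⋃_k E_k(T)` is dense in `L²(X,μ)`. -/
def QuasiDiscreteSpectrum {X : Type*} [MeasurableSpace X] (T : X → X) (μ : Measure X) : Prop :=
  TotallyErgodic T μ ∧
  Dense ((Submodule.span ℂ
      {g : Lp ℂ 2 μ | ∃ k : ℕ, ∃ f ∈ quasiEigenfunctions T μ k, ⇑g =ᵐ[μ] f} :
        Submodule ℂ (Lp ℂ 2 μ)) : Set (Lp ℂ 2 μ))

/-- `S` is uniquely ergodic with unique invariant Borel probability measure `ν`. -/
def UniquelyErgodicWith {Y : Type*} [MeasurableSpace Y] (S : Y → Y) (ν : Measure Y) : Prop :=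
  IsProbabilityMeasure ν ∧ ν.map S = ν ∧
  ∀ μ' : Measure Y, IsProbabilityMeasure μ' → μ'.map S = μ' → μ' = ν

/-- A unimodular function orthogonal to all its translates has mean zero (Bessel). -/
lemma MeasureTheory.integral_eq_zero_of_orthogonal_iterates {Z : Type*}
    [MeasurableSpace Z] {R : Z → Z} {κ : Measure Z} [IsProbabilityMeasure κ]
    (hR : MeasurePreserving R κ κ) {F : Z → ℂ} (hm : AEStronglyMeasurable F κ)
    (hn : ∀ᵐ z ∂κ, ‖F z‖ = 1)
    (horth : ∀ n ≠ 0, ∫ z, F (R^[n] z) * starRingEnd ℂ (F z) ∂κ = 0) : ∫ z, F z ∂κ = 0 := by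
  have hL : MemLp F 2 κ := .of_bound hm 1 (hn.mono fun _ hz => hz.le)
  have hLn (n : ℕ) : MemLp (fun z => F (R^[n] z)) 2 κ := hL.comp_measurePreserving (hR.iterate n)
  have h1 : MemLp (fun _ : Z => (1 : ℂ)) 2 κ := memLp_const 1
  let v (n : ℕ) : Lp ℂ 2 κ := (hLn n).toLp _
  have hinner (m n : ℕ) :
      inner ℂ (v m) (v n) = ∫ z, F (R^[n] z) * starRingEnd ℂ (F (R^[m] z)) ∂κ := by
    rw [L2.inner_def]
    refine integral_congr_ae ?_
    filter_upwards [(hLn m).coeFn_toLp, (hLn n).coeFn_toLp] with z h1 h2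
    simp only [v, h1, h2, RCLike.inner_apply]
  have hlt (m d : ℕ) (hd : d ≠ 0) : inner ℂ (v m) (v (m + d)) = 0 := by
    rw [hinner, ← horth d hd]
    have hmeas : AEStronglyMeasurable (fun z => F (R^[d] z) * starRingEnd ℂ (F z)) κ :=
      (hLn d).1.mul (Complex.continuous_conj.comp_aestronglyMeasurable hm)
    have := (hR.iterate m).map_eq
    conv_rhs => rw [← this]
    rw [integral_map (hR.iterate m).aemeasurable (this.symm ▸ hmeas)]
    simp_rw [← Function.iterate_add_apply, add_comm d m]
  have hv : Orthonormal ℂ v := by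
    rw [orthonormal_iff_ite]
    intro m n
    split_ifs with hmn
    · subst hmn
      rw [hinner]
      have : ∀ᵐ z ∂κ, F (R^[m] z) * starRingEnd ℂ (F (R^[m] z)) = 1 := by
        filter_upwards [(hR.iterate m).quasiMeasurePreserving.ae hn] with z hz
        rw [Complex.mul_conj, Complex.normSq_eq_norm_sq, hz]
        simp
      rw [integral_congr_ae this]
      simp
    · rcases lt_or_gt_of_ne hmn with h | h
      · obtain ⟨d, rfl⟩ := Nat.exists_eq_add_of_le h.le
        exact hlt m d (by omega)
      · obtain ⟨d, rfl⟩ := Nat.exists_eq_add_of_le h.le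
        rw [← inner_conj_symm, hlt n d (by omega), map_zero]
  have hi (n : ℕ) : inner ℂ (v n) (h1.toLp _) = starRingEnd ℂ (∫ z, F z ∂κ) := by
    rw [L2.inner_def, ← integral_conj]
    have e := (hR.iterate n).map_eq
    conv_rhs => rw [← e]
    rw [integral_map (hR.iterate n).aemeasurable
      (e.symm ▸ Complex.continuous_conj.comp_aestronglyMeasurable hm)]
    refine integral_congr_ae ?_
    filter_upwards [(hLn n).coeFn_toLp, h1.coeFn_toLp] with z h2 h3
    simp only [v, h2, h3, RCLike.inner_apply, one_mul]
  have hb (N : ℕ) : N * ‖∫ z, F z ∂κ‖ ^ 2 ≤ ‖h1.toLp _‖ ^ 2 := by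
    have := hv.sum_inner_products_le (s := Finset.range N) (h1.toLp _)
    simpa only [hi, RCLike.norm_conj, Finset.sum_const, Finset.card_range, nsmul_eq_mul] using this
  by_contra hne
  have hpos : 0 < ‖∫ z, F z ∂κ‖ ^ 2 := by positivity
  obtain ⟨N, hN⟩ := exists_nat_gt (‖h1.toLp _‖ ^ 2 / ‖∫ z, F z ∂κ‖ ^ 2)
  rw [div_lt_iff₀ hpos] at hN
  exact (hb N).not_gt hN

/-- `F` is an almost-everywhere quasi-eigenfunction of order `k` of `R`: it has modulus one and its
`k`-th multiplicative derivative `f ↦ (f ∘ R) / f` is a.e. equal to the constant `c`. -/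
def IsQuasiEigen {Z : Type*} [MeasurableSpace Z] (R : Z → Z) (κ : Measure Z) :
    ℕ → ℂ → (Z → ℂ) → Prop
  | 0, c, F => ‖c‖ = 1 ∧ F =ᵐ[κ] fun _ => c
  | k + 1, c, F => AEStronglyMeasurable F κ ∧ (∀ᵐ z ∂κ, ‖F z‖ = 1) ∧
      ∃ G, IsQuasiEigen R κ k c G ∧ ∀ᵐ z ∂κ, F (R z) = G z * F z

namespace IsQuasiEigen

variable {Z : Type*} [MeasurableSpace Z] {R : Z → Z} {κ : Measure Z}

lemma aestronglyMeasurable {k : ℕ} {c : ℂ} {F : Z → ℂ} (h : IsQuasiEigen R κ k c F) :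
    AEStronglyMeasurable F κ := by
  cases k with
  | zero => exact aestronglyMeasurable_const.congr h.2.symm
  | succ k => exact h.1

lemma norm_eq_one {k : ℕ} {c : ℂ} {F : Z → ℂ} (h : IsQuasiEigen R κ k c F) :
    ∀ᵐ z ∂κ, ‖F z‖ = 1 := by
  cases k with
  | zero =>
    filter_upwards [h.2] with z hz
    rw [hz, h.1]
  | succ k => exact h.2.1

lemma one (k : ℕ) : IsQuasiEigen R κ k 1 fun _ => 1 := by
  induction k with
  | zero => exact ⟨by simp, by rfl⟩
  | succ k ih => exact ⟨aestronglyMeasurable_const, by simp, _, ih, by simp⟩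

lemma mul {k : ℕ} {c c' : ℂ} {F F' : Z → ℂ} (h : IsQuasiEigen R κ k c F)
    (h' : IsQuasiEigen R κ k c' F') : IsQuasiEigen R κ k (c * c') fun z => F z * F' z := by
  induction k generalizing c c' F F' with
  | zero =>
    refine ⟨by rw [norm_mul, h.1, h'.1, one_mul], ?_⟩
    filter_upwards [h.2, h'.2] with z hz hz'
    rw [hz, hz']
  | succ k ih =>
    obtain ⟨hm, hn, G, hG, e⟩ := h
    obtain ⟨hm', hn', G', hG', e'⟩ := h'
    refine ⟨hm.mul hm', ?_, _, ih hG hG', ?_⟩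
    · filter_upwards [hn, hn'] with z hz hz'
      rw [norm_mul, hz, hz', one_mul]
    · filter_upwards [e, e'] with z hz hz'
      rw [hz, hz']
      ring

lemma conj {k : ℕ} {c : ℂ} {F : Z → ℂ} (h : IsQuasiEigen R κ k c F) :
    IsQuasiEigen R κ k (starRingEnd ℂ c) fun z => starRingEnd ℂ (F z) := by
  induction k generalizing c F with
  | zero =>
    refine ⟨by rw [RCLike.norm_conj, h.1], ?_⟩
    filter_upwards [h.2] with z hz
    rw [hz]
  | succ k ih =>
    obtain ⟨hm, hn, G, hG, e⟩ := h
    refine ⟨Complex.continuous_conj.comp_aestronglyMeasurable hm, ?_, _, ih hG, ?_⟩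
    · filter_upwards [hn] with z hz
      rw [RCLike.norm_conj, hz]
    · filter_upwards [e] with z hz
      rw [hz, map_mul]

lemma comp_semiconj {W : Type*} [MeasurableSpace W] {T : W → W} {ρ : Measure W} {π : W → Z}
    (hπ : MeasurePreserving π ρ κ) (hsc : Function.Semiconj π T R) {k : ℕ} {c : ℂ} {F : Z → ℂ}
    (h : IsQuasiEigen R κ k c F) : IsQuasiEigen T ρ k c fun w => F (π w) := by
  induction k generalizing c F with
  | zero => exact ⟨h.1, hπ.quasiMeasurePreserving.ae h.2⟩
  | succ k ih =>
    obtain ⟨hm, hn, G, hG, e⟩ := h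
    refine ⟨hm.comp_measurePreserving hπ, hπ.quasiMeasurePreserving.ae hn, _, ih hG, ?_⟩
    filter_upwards [hπ.quasiMeasurePreserving.ae e] with w hw
    rw [hsc w, hw]

/-- The `n`-step multiplicative derivative of a quasi-eigenfunction of order `k + 1` has order
`k`, and its leading constant is the `n`-th power of the original one. -/
lemma exists_iterate (hR : MeasurePreserving R κ κ) {k : ℕ} {c : ℂ} {F : Z → ℂ}
    (h : IsQuasiEigen R κ (k + 1) c F) (n : ℕ) :
    ∃ G, IsQuasiEigen R κ k (c ^ n) G ∧ ∀ᵐ z ∂κ, F (R^[n] z) = G z * F z := by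
  obtain ⟨hm, hn, G, hG, e⟩ := h
  induction n with
  | zero => exact ⟨_, by simpa using one k, by simp⟩
  | succ n ih =>
    obtain ⟨H, hH, e'⟩ := ih
    have hGn : IsQuasiEigen R κ k c fun z => G (R^[n] z) :=
      hG.comp_semiconj (hR.iterate n) (Function.Commute.iterate_self R n).semiconj
    refine ⟨_, pow_succ' c n ▸ hGn.mul hH, ?_⟩
    filter_upwards [e', (hR.iterate n).quasiMeasurePreserving.ae e] with z h1 h2
    rw [Function.iterate_succ_apply', h2, h1]
    ring

lemma iterate (hR : MeasurePreserving R κ κ) {k : ℕ} {c : ℂ} {F : Z → ℂ}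
    (h : IsQuasiEigen R κ k c F) (p : ℕ) : IsQuasiEigen R^[p] κ k (c ^ p ^ k) F := by
  induction k generalizing c F with
  | zero => simpa [IsQuasiEigen] using h
  | succ k ih =>
    obtain ⟨G, hG, e⟩ := h.exists_iterate hR p
    refine ⟨h.1, h.2.1, G, ?_, e⟩
    rw [pow_succ', pow_mul]
    exact ih hG

lemma integrable [IsFiniteMeasure κ] {k : ℕ} {c : ℂ} {F : Z → ℂ} (h : IsQuasiEigen R κ k c F) :
    Integrable F κ :=
  .of_bound h.aestronglyMeasurable 1 (h.norm_eq_one.mono fun _ hz => hz.le)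

/-- A quasi-eigenfunction of positive order whose leading constant is not a root of unity has
mean zero for every invariant probability measure. -/
lemma integral_eq_zero [IsProbabilityMeasure κ] (hR : MeasurePreserving R κ κ) {k : ℕ} {c : ℂ}
    {F : Z → ℂ} (h : IsQuasiEigen R κ (k + 1) c F) (hc : ∀ n ≠ 0, c ^ n ≠ 1) :
    ∫ z, F z ∂κ = 0 := by
  induction k generalizing c F with
  | zero =>
    obtain ⟨hm, -, G, ⟨-, hG⟩, e⟩ := h
    have : ∫ z, F (R z) ∂κ = c * ∫ z, F z ∂κ := by
      rw [← integral_const_mul]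
      refine integral_congr_ae ?_
      filter_upwards [hG, e] with z h1 h2
      rw [h2, h1]
    have e2 : ∫ z, F (R z) ∂κ = ∫ z, F z ∂κ := by
      conv_rhs => rw [← hR.map_eq]
      rw [integral_map hR.aemeasurable (hR.map_eq.symm ▸ hm)]
    rw [e2] at this
    have hc1 : c - 1 ≠ 0 := sub_ne_zero.2 (by simpa using hc 1 one_ne_zero)
    exact (mul_eq_zero.1 (by linear_combination -this : (c - 1) * ∫ z, F z ∂κ = 0)).resolve_left hc1
  | succ k ih =>
    refine integral_eq_zero_of_orthogonal_iterates hR h.1 h.2.1 fun n hn => ?_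
    obtain ⟨G, hG, e⟩ := h.exists_iterate hR n
    rw [← ih hG fun m hm => by rw [← pow_mul]; exact hc _ (mul_ne_zero hn hm)]
    refine integral_congr_ae ?_
    filter_upwards [e, h.2.1] with z h1 h2
    rw [h1, mul_assoc, Complex.mul_conj, Complex.normSq_eq_norm_sq, h2]
    simp

/-- For a totally ergodic map, a quasi-eigenfunction is either constant or its leading constant
can be chosen not to be a root of unity. -/
lemma ae_const_or_irrational [IsProbabilityMeasure κ] (hR : TotallyErgodic R κ) {k : ℕ} {c : ℂ}
    {F : Z → ℂ} (h : IsQuasiEigen R κ k c F) :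
    (∃ b, ‖b‖ = 1 ∧ F =ᵐ[κ] fun _ => b) ∨
      ∃ j b, IsQuasiEigen R κ (j + 1) b F ∧ ∀ n ≠ 0, b ^ n ≠ 1 := by
  induction k generalizing c F with
  | zero => exact .inl ⟨c, h⟩
  | succ k ih =>
    obtain ⟨hm, hn, G, hG, e⟩ := h
    obtain ⟨b, hb⟩ | ⟨j, b, hb, hb'⟩ := ih hG
    · by_cases hroot : ∀ n ≠ 0, b ^ n ≠ 1
      · exact .inr ⟨0, b, ⟨hm, hn, G, hb, e⟩, hroot⟩
      · push Not at hroot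
        obtain ⟨n, hn0, hbn⟩ := hroot
        have hF : IsQuasiEigen R κ (0 + 1) b F := ⟨hm, hn, G, hb, e⟩
        have hR1 : MeasurePreserving R κ κ := (hR 1 one_ne_zero).toMeasurePreserving
        obtain ⟨H, hH, e'⟩ := hF.exists_iterate hR1 n
        have hinv : F ∘ R^[n] =ᵐ[κ] F := by
          filter_upwards [hH.2, e'] with z h1 h2
          rw [Function.comp_apply, h2, h1, hbn, one_mul]
        obtain ⟨a, ha⟩ := (hR n hn0).ae_eq_const_of_ae_eq_comp_ae hm hinv
        obtain ⟨z, hz, hz'⟩ := (ha.and hn).exists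
        exact .inl ⟨a, by rw [← hz', hz]; rfl, ha⟩
    · exact .inr ⟨j + 1, b, ⟨hm, hn, G, hb, e⟩, hb'⟩

end IsQuasiEigen

lemma isQuasiEigen_of_mem_quasiEigenfunctions {X : Type*} [MeasurableSpace X] {T : X → X}
    {μ : Measure X} {k : ℕ} {F : X → ℂ} (h : F ∈ quasiEigenfunctions T μ k) :
    ∃ c, IsQuasiEigen T μ k c F := by
  induction k generalizing F with
  | zero =>
    obtain ⟨c, hc, -, rfl⟩ := h
    exact ⟨c, hc, by rfl⟩
  | succ k ih =>
    obtain ⟨hm, hn, hG⟩ := h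
    obtain ⟨c, hc⟩ := ih hG
    refine ⟨c, hm.aestronglyMeasurable, hn, _, hc, ?_⟩
    filter_upwards [hn] with x hx
    rw [div_mul_cancel₀ _ (norm_ne_zero_iff.1 (by rw [hx]; exact one_ne_zero))]

/-- The empirical measure of the orbit segment `R z, …, R^N z`. -/
noncomputable def empiricalMeasure {Z : Type*} [MeasurableSpace Z] (R : Z → Z) (z : Z) (N : ℕ) :
    Measure Z :=
  (N : ENNReal)⁻¹ • ∑ n ∈ Finset.Icc 1 N, Measure.dirac (R^[n] z)

lemma isProbabilityMeasure_empiricalMeasure {Z : Type*} [MeasurableSpace Z] (R : Z → Z) (z : Z)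
    {N : ℕ} (hN : N ≠ 0) : IsProbabilityMeasure (empiricalMeasure R z N) := by
  constructor
  simp only [empiricalMeasure, Measure.smul_apply, Measure.coe_finsetSum, Finset.sum_apply,
    measure_univ, Finset.sum_const, Nat.card_Icc, smul_eq_mul, nsmul_eq_mul, mul_one,
    Nat.add_sub_cancel]
  exact ENNReal.inv_mul_cancel (by simpa using hN) (ENNReal.natCast_ne_top N)

lemma integral_empiricalMeasure {Z 𝕜 : Type*} [MeasurableSpace Z] [TopologicalSpace Z]
    [BorelSpace Z] [RCLike 𝕜] (R : Z → Z) (z : Z) (N : ℕ) {g : Z → 𝕜} (hg : Continuous g) :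
    ∫ x, g x ∂(empiricalMeasure R z N) = (N : 𝕜)⁻¹ * ∑ n ∈ Finset.Icc 1 N, g (R^[n] z) := by
  have hgm := hg.stronglyMeasurable
  rw [empiricalMeasure, integral_smul_measure, integral_finsetSum_measure]
  · simp only [integral_dirac' _ _ hgm, ENNReal.toReal_inv, ENNReal.toReal_natCast,
      RCLike.real_smul_eq_coe_mul, RCLike.ofReal_inv, RCLike.ofReal_natCast]
  · intro n _
    exact integrable_dirac' hgm (by simp)

lemma tendsto_orbit_average_comp_sub {Z : Type*} {R : Z → Z} (z : Z) {g : Z → ℝ}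
    {C : ℝ} (hC : ∀ x, ‖g x‖ ≤ C) :
    Tendsto (fun N : ℕ => (N : ℝ)⁻¹ * ∑ n ∈ Finset.Icc 1 N, g (R (R^[n] z)) -
      (N : ℝ)⁻¹ * ∑ n ∈ Finset.Icc 1 N, g (R^[n] z)) atTop (nhds 0) := by
  have hsum (N : ℕ) : ∑ n ∈ Finset.Icc 1 N, g (R (R^[n] z)) - ∑ n ∈ Finset.Icc 1 N, g (R^[n] z) =
      g (R^[N + 1] z) - g (R z) := by
    induction N with
    | zero => simp
    | succ N ih =>
      rw [Finset.sum_Icc_succ_top (by omega), Finset.sum_Icc_succ_top (by omega),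
        ← Function.iterate_succ_apply' R (N + 1)]
      linarith
  have hlim : Tendsto (fun N : ℕ => (N : ℝ)⁻¹ * (2 * C)) atTop (nhds 0) := by
    simpa using (tendsto_inv_atTop_nhds_zero_nat (𝕜 := ℝ)).mul_const (2 * C)
  refine squeeze_zero_norm (fun N => ?_) hlim
  rw [← mul_sub, hsum, norm_mul, norm_inv, RCLike.norm_natCast]
  gcongr
  linarith [norm_sub_le (g (R^[N + 1] z)) (g (R z)), hC (R^[N + 1] z), hC (R z)]

/-- Krylov–Bogoliubov: along any ultrafilter, the empirical measures of an orbit converge weakly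
to an invariant probability measure. -/
lemma exists_invariant_measure_tendsto {Z : Type*} [TopologicalSpace Z] [CompactSpace Z]
    [T2Space Z] [HasOuterApproxClosed Z] [MeasurableSpace Z] [BorelSpace Z] {R : Z → Z}
    (hR : Continuous R) (z : Z) (U : Ultrafilter ℕ) (hU : (U : Filter ℕ) ≤ atTop) :
    ∃ κ : Measure Z, IsProbabilityMeasure κ ∧ κ.map R = κ ∧ ∀ g : Z → ℂ, Continuous g →
      Tendsto (fun N : ℕ => (N : ℂ)⁻¹ * ∑ n ∈ Finset.Icc 1 N, g (R^[n] z)) U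
        (nhds (∫ x, g x ∂κ)) := by
  have hex (N : ℕ) : ∃ μ : ProbabilityMeasure Z,
      N ≠ 0 → (μ : Measure Z) = empiricalMeasure R z N := by
    by_cases hN : N = 0
    · exact ⟨⟨Measure.dirac z, inferInstance⟩, fun h => absurd hN h⟩
    · exact ⟨⟨_, isProbabilityMeasure_empiricalMeasure R z hN⟩, fun _ => rfl⟩
  choose μ hμ using hex
  have hμU : ∀ᶠ N in (U : Filter ℕ), (μ N : Measure Z) = empiricalMeasure R z N :=
    hU ((eventually_ne_atTop 0).mono hμ)
  let κ := (U.map μ).lim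
  have hκ : Tendsto μ U (nhds κ) := (U.map μ).le_nhds_lim
  have hreal := ProbabilityMeasure.tendsto_iff_forall_integral_tendsto.1 hκ
  have hcomplex := (ProbabilityMeasure.tendsto_iff_forall_integral_rclike_tendsto ℂ).1 hκ
  refine ⟨κ, inferInstance, ?_, fun g hg => ?_⟩
  · have : IsProbabilityMeasure ((κ : Measure Z).map R) :=
      Measure.isProbabilityMeasure_map hR.aemeasurable
    refine ext_of_forall_integral_eq_of_IsFiniteMeasure fun g => ?_
    rw [integral_map hR.aemeasurable g.continuous.aestronglyMeasurable]
    have h1 := hreal (g.compContinuous ⟨R, hR⟩)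
    refine tendsto_nhds_unique h1 ?_
    have h2 := ((tendsto_orbit_average_comp_sub (R := R) z g.norm_coe_le_norm).mono_left hU).add
      (hreal g)
    rw [zero_add] at h2
    refine h2.congr' ?_
    filter_upwards [hμU] with N hN
    rw [hN, integral_empiricalMeasure R z N g.continuous,
      integral_empiricalMeasure R z N (g.compContinuous ⟨R, hR⟩).continuous]
    exact sub_add_cancel _ _
  · refine (hcomplex (BoundedContinuousFunction.mkOfCompact ⟨g, hg⟩)).congr' ?_
    filter_upwards [hμU] with N hN
    rw [hN]
    exact integral_empiricalMeasure R z N hg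

lemma UniquelyErgodicWith.iterate {Y : Type*} [TopologicalSpace Y] [MeasurableSpace Y]
    [BorelSpace Y] {S : Y → Y} {ν : Measure Y} (hS : Continuous S) (h : UniquelyErgodicWith S ν)
    (htot : TotallyErgodic S ν) {p : ℕ} (hp : p ≠ 0) : UniquelyErgodicWith S^[p] ν := by
  have hν := h.1
  refine ⟨hν, (htot p hp).toMeasurePreserving.map_eq, fun ρ hρ hinv => ?_⟩
  have hSm := hS.measurable
  have hmap (i : ℕ) : (ρ.map S^[i]).map S = ρ.map S^[i + 1] := by
    rw [Measure.map_map hSm (hSm.iterate i), Function.iterate_succ']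
  let σ : Measure Y := (p : ENNReal)⁻¹ • ∑ i ∈ Finset.range p, ρ.map S^[i]
  have hp0 : (p : ENNReal) ≠ 0 := by simpa using hp
  have hσ : IsProbabilityMeasure σ := by
    constructor
    have (i : ℕ) : ρ.map S^[i] Set.univ = 1 := by
      rw [Measure.map_apply (hSm.iterate i) .univ, Set.preimage_univ, measure_univ]
    simp only [σ, Measure.smul_apply, Measure.coe_finsetSum, Finset.sum_apply, this,
      Finset.sum_const, Finset.card_range, smul_eq_mul, nsmul_eq_mul, mul_one]
    exact ENNReal.inv_mul_cancel hp0 (ENNReal.natCast_ne_top p)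
  have hσinv : σ.map S = σ := by
    simp only [σ]
    rw [Measure.map_smul, ← Measure.mapₗ_apply_of_measurable hSm, map_sum]
    simp only [Measure.mapₗ_apply_of_measurable hSm, hmap]
    congr 1
    obtain ⟨r, rfl⟩ := Nat.exists_eq_succ_of_ne_zero hp
    rw [Finset.sum_range_succ, Finset.sum_range_succ' (fun i => ρ.map S^[i])]
    congr 1
    simpa using hinv
  have hac : ρ ≪ ν := by
    rw [← h.2.2 σ hσ hσinv]
    refine Measure.AbsolutelyContinuous.mk fun s _ hs => ?_
    simp only [σ, Measure.smul_apply, Measure.coe_finsetSum, Finset.sum_apply, smul_eq_mul,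
      mul_eq_zero, ENNReal.inv_eq_zero, ENNReal.natCast_ne_top, false_or,
      Finset.sum_eq_zero_iff, Finset.mem_range] at hs
    simpa using hs 0 (by omega)
  exact (htot p hp).eq_of_absolutelyContinuous ⟨hSm.iterate p, hinv⟩ hac

section UniqueErgodicity

variable {Y : Type*} [MetricSpace Y] [CompactSpace Y] [MeasurableSpace Y] [BorelSpace Y]
  {S : Y → Y} {ν : Measure Y}

lemma UniquelyErgodicWith.tendsto_average (hS : Continuous S) (h : UniquelyErgodicWith S ν)
    (y : Y) {g : Y → ℂ} (hg : Continuous g) :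
    Tendsto (fun N : ℕ => (N : ℂ)⁻¹ * ∑ n ∈ Finset.Icc 1 N, g (S^[n] y)) atTop
      (nhds (∫ x, g x ∂ν)) := by
  rw [tendsto_iff_ultrafilter]
  intro U hU
  obtain ⟨κ, hκ, hinv, hlim⟩ := exists_invariant_measure_tendsto hS y U hU
  rw [← h.2.2 κ hκ hinv]
  exact hlim g hg

/-- Distinct powers of a totally ergodic uniquely ergodic map decorrelate continuous functions
that are close in `L¹` to a quasi-eigenfunction with irrational leading constant. -/
lemma eventually_norm_correlation_le (hS : Continuous S) (h : UniquelyErgodicWith S ν)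
    (htot : TotallyErgodic S ν) {k : ℕ} {c : ℂ} {F : Y → ℂ} (hF : IsQuasiEigen S ν (k + 1) c F)
    (hc : ∀ n ≠ 0, c ^ n ≠ 1) {g : Y → ℂ} (hg : Continuous g) (hg1 : ∀ x, ‖g x‖ ≤ 1) {ε : ℝ}
    (hε : 2 * ∫ x, ‖F x - g x‖ ∂ν < ε) (y : Y) {p q : ℕ} (hp : p ≠ 0) (hq : q ≠ 0)
    (hpq : p ≠ q) :
    ∀ᶠ N : ℕ in atTop,
      ‖∑ n ∈ Finset.Icc 1 N, g (S^[p * n] y) * starRingEnd ℂ (g (S^[q * n] y))‖ ≤ ε * N := by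
  have hν := h.1
  have hSν : MeasurePreserving S ν ν := (htot 1 one_ne_zero).toMeasurePreserving
  refine mem_iff_ultrafilter.2 fun U hU => ?_
  let R : Y × Y → Y × Y := Prod.map S^[p] S^[q]
  have hR : Continuous R := (hS.iterate p).prodMap (hS.iterate q)
  obtain ⟨κ, hκ, hinv, hlim⟩ := exists_invariant_measure_tendsto hR (y, y) U hU
  have hκR : MeasurePreserving R κ κ := ⟨hR.measurable, hinv⟩
  have hfst : MeasurePreserving Prod.fst κ ν := by
    refine ⟨measurable_fst, (h.iterate hS htot hp).2.2 _
      (Measure.isProbabilityMeasure_map measurable_fst.aemeasurable) ?_⟩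
    rw [Measure.map_map (hS.iterate p).measurable measurable_fst]
    conv_rhs => rw [← hinv]
    rw [Measure.map_map measurable_fst hR.measurable]
    rfl
  have hsnd : MeasurePreserving Prod.snd κ ν := by
    refine ⟨measurable_snd, (h.iterate hS htot hq).2.2 _
      (Measure.isProbabilityMeasure_map measurable_snd.aemeasurable) ?_⟩
    rw [Measure.map_map (hS.iterate q).measurable measurable_snd]
    conv_rhs => rw [← hinv]
    rw [Measure.map_map measurable_snd hR.measurable]
    rfl
  have hF1 : IsQuasiEigen R κ (k + 1) (c ^ p ^ (k + 1)) fun z => F z.1 :=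
    (hF.iterate hSν p).comp_semiconj hfst fun _ => rfl
  have hF2 : IsQuasiEigen R κ (k + 1) (c ^ q ^ (k + 1)) fun z => F z.2 :=
    (hF.iterate hSν q).comp_semiconj hsnd fun _ => rfl
  have hFF := hF1.mul hF2.conj
  have hcn : ‖c‖ = 1 := by
    clear hF1 hF2 hFF hc hε
    induction k generalizing F with
    | zero => exact hF.2.2.choose_spec.1.1
    | succ k ih => exact ih hF.2.2.choose_spec.1
  have hint0 : ∫ z, F z.1 * starRingEnd ℂ (F z.2) ∂κ = 0 := by
    refine hFF.integral_eq_zero hκR fun n hn heq => ?_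
    have hcc : c * starRingEnd ℂ c = 1 := by
      rw [Complex.mul_conj, Complex.normSq_eq_norm_sq, hcn]; simp
    have heq' : c ^ (p ^ (k + 1) * n) = c ^ (q ^ (k + 1) * n) := by
      have h1 : (c * starRingEnd ℂ c) ^ (q ^ (k + 1) * n) = 1 := by rw [hcc, one_pow]
      rw [map_pow, mul_pow, ← pow_mul, ← pow_mul] at heq
      rw [mul_pow] at h1
      have hne : starRingEnd ℂ c ^ (q ^ (k + 1) * n) ≠ 0 := right_ne_zero_of_mul_eq_one h1
      exact mul_right_cancel₀ hne (heq.trans h1.symm)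
    have hinj : Function.Injective (fun m : ℕ => c ^ m) := by
      have hc0 : c ≠ 0 := left_ne_zero_of_mul_eq_one hcc
      intro a b hab
      wlog hle : a ≤ b generalizing a b
      · exact (this hab.symm (le_of_not_ge hle)).symm
      obtain ⟨d, rfl⟩ := Nat.exists_eq_add_of_le hle
      by_contra hd
      have : c ^ d = 1 := by
        simpa [pow_add, pow_ne_zero a hc0] using hab
      exact hc d (by omega) this
    have := Nat.eq_of_mul_eq_mul_right (Nat.pos_of_ne_zero hn) (hinj heq')
    exact hpq (Nat.pow_left_injective (Nat.succ_ne_zero k) this)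
  have hgint : Integrable g ν := .of_bound hg.aestronglyMeasurable 1 (.of_forall hg1)
  have hsub : Integrable (fun x => ‖F x - g x‖) ν := (hF.integrable.sub hgint).norm
  have hgg : Continuous fun z : Y × Y => g z.1 * starRingEnd ℂ (g z.2) := by fun_prop
  have hggint : Integrable (fun z : Y × Y => g z.1 * starRingEnd ℂ (g z.2)) κ := by
    refine .of_bound hgg.aestronglyMeasurable 1 (.of_forall fun z => ?_)
    rw [norm_mul, RCLike.norm_conj]
    exact mul_le_one₀ (hg1 _) (norm_nonneg _) (hg1 _)
  have i1 : Integrable (fun z : Y × Y => ‖F z.1 - g z.1‖) κ :=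
    hfst.integrable_comp_of_integrable hsub
  have i2 : Integrable (fun z : Y × Y => ‖F z.2 - g z.2‖) κ :=
    hsnd.integrable_comp_of_integrable hsub
  have e1 : ∫ z, ‖F z.1 - g z.1‖ ∂κ = ∫ x, ‖F x - g x‖ ∂ν := by
    rw [← hfst.map_eq, integral_map measurable_fst.aemeasurable (hfst.map_eq.symm ▸ hsub.1)]
  have e2 : ∫ z, ‖F z.2 - g z.2‖ ∂κ = ∫ x, ‖F x - g x‖ ∂ν := by
    rw [← hsnd.map_eq, integral_map measurable_snd.aemeasurable (hsnd.map_eq.symm ▸ hsub.1)]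
  have hbound : ‖∫ z, g z.1 * starRingEnd ℂ (g z.2) ∂κ‖ < ε := by
    refine lt_of_le_of_lt ?_ hε
    rw [← norm_neg, ← zero_sub, ← hint0, ← integral_sub hFF.integrable hggint, two_mul]
    nth_rw 1 [← e1]
    rw [← e2, ← integral_add i1 i2]
    refine norm_integral_le_of_norm_le (i1.add i2) ?_
    filter_upwards [hF2.norm_eq_one] with z hz
    have : F z.1 * starRingEnd ℂ (F z.2) - g z.1 * starRingEnd ℂ (g z.2) =
        (F z.1 - g z.1) * starRingEnd ℂ (F z.2) + g z.1 * starRingEnd ℂ (F z.2 - g z.2) := by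
      rw [map_sub]; ring
    rw [this]
    refine (norm_add_le _ _).trans ?_
    rw [norm_mul, norm_mul, RCLike.norm_conj, RCLike.norm_conj, hz, mul_one]
    gcongr
    exact mul_le_of_le_one_left (norm_nonneg _) (hg1 _)
  have hev := (hlim _ hgg).norm.eventually_lt_const hbound
  filter_upwards [hev, hU (eventually_ne_atTop 0)] with N hN hN0
  have hN' : (0 : ℝ) < N := by positivity
  rw [norm_mul, norm_inv, RCLike.norm_natCast, inv_mul_lt_iff₀ hN', mul_comm] at hN
  refine le_of_eq_of_le ?_ hN.le
  congr 1
  refine Finset.sum_congr rfl fun n _ => ?_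
  simp only [R, Prod.map_iterate, Prod.map_apply, ← Function.iterate_mul]

end UniqueErgodicity

section KataiCriterion

open Finset

lemma sum_Icc_ite_dvd (p N : ℕ) (hp : p ≠ 0) {M : Type*} [AddCommMonoid M] (b : ℕ → M) :
    ∑ n ∈ Icc 1 N, (if p ∣ n then b n else 0) = ∑ m ∈ Icc 1 (N / p), b (p * m) := by
  have hp' : 0 < p := Nat.pos_of_ne_zero hp
  rw [← sum_filter]
  symm
  refine sum_bij (fun m _ => p * m) ?_ ?_ ?_ fun _ _ => rfl
  · intro m hm
    simp only [mem_Icc, mem_filter, dvd_mul_right, and_true] at hm ⊢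
    refine ⟨Nat.mul_pos hp' hm.1, ?_⟩
    rw [mul_comm]
    exact (Nat.le_div_iff_mul_le hp').1 hm.2
  · intro m _ m' _ h
    exact Nat.eq_of_mul_eq_mul_left hp' h
  · intro n hn
    simp only [mem_Icc, mem_filter] at hn
    obtain ⟨⟨h1, h2⟩, m, rfl⟩ := hn
    refine ⟨m, mem_Icc.2 ⟨Nat.pos_of_mul_pos_left h1, ?_⟩, rfl⟩
    rw [Nat.le_div_iff_mul_le hp', mul_comm]
    exact h2

lemma sum_Icc_ite_mul_le (p N : ℕ) (hp : p ≠ 0) {M : Type*} [AddCommMonoid M] (b : ℕ → M) :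
    ∑ m ∈ Icc 1 N, (if p * m ≤ N then b m else 0) = ∑ m ∈ Icc 1 (N / p), b m := by
  have hp' : 0 < p := Nat.pos_of_ne_zero hp
  rw [← sum_filter]
  congr 1
  ext m
  simp only [mem_Icc, mem_filter, Nat.le_div_iff_mul_le hp', mul_comm m p]
  constructor
  · exact fun h => ⟨h.1.1, h.2⟩
  · exact fun h => ⟨⟨h.1, (Nat.le_mul_of_pos_left m hp').trans h.2⟩, h.2⟩

/-- A Turán–Kubilius inequality for a finite set of primes. -/
lemma sum_sq_card_primeDivisors_sub_le (P : Finset ℕ) (hP : ∀ p ∈ P, p.Prime) (N : ℕ) :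
    ∑ n ∈ Icc 1 N, ((∑ p ∈ P, if p ∣ n then (1 : ℝ) else 0) - ∑ p ∈ P, (1 : ℝ) / p) ^ 2 ≤
      N * (∑ p ∈ P, (1 : ℝ) / p) + 2 * (∑ p ∈ P, (1 : ℝ) / p) * #P := by
  set L : ℝ := ∑ p ∈ P, (1 : ℝ) / p with hL
  have hL0 : 0 ≤ L := sum_nonneg fun p _ => by positivity
  have hcount (d : ℕ) (hd : d ≠ 0) :
      ∑ n ∈ Icc 1 N, (if d ∣ n then (1 : ℝ) else 0) = ((N / d : ℕ) : ℝ) := by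
    rw [sum_Icc_ite_dvd d N hd]
    simp
  have hfirst : N * L - #P ≤ ∑ n ∈ Icc 1 N, ∑ p ∈ P, if p ∣ n then (1 : ℝ) else 0 := by
    rw [sum_comm, hL, mul_sum, card_eq_sum_ones, Nat.cast_sum, ← sum_sub_distrib]
    refine sum_le_sum fun p hp => ?_
    rw [hcount p (hP p hp).ne_zero]
    have h := Nat.lt_div_mul_add (a := N) (hP p hp).pos
    have hp0 : (0 : ℝ) < p := by exact_mod_cast (hP p hp).pos
    rw [mul_one_div, Nat.cast_one, sub_le_iff_le_add, div_le_iff₀ hp0]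
    have h' : (N : ℝ) < ((N / p : ℕ) : ℝ) * p + p := by exact_mod_cast h
    linarith
  have hsecond : ∑ n ∈ Icc 1 N, (∑ p ∈ P, if p ∣ n then (1 : ℝ) else 0) ^ 2 ≤
      N * L ^ 2 + N * L := by
    have hterm : ∀ p ∈ P, ∀ q ∈ P,
        ∑ n ∈ Icc 1 N, (if p ∣ n then (1 : ℝ) else 0) * (if q ∣ n then 1 else 0) ≤
          N * ((1 : ℝ) / p * (1 / q)) + if p = q then N * ((1 : ℝ) / p) else 0 := by
      intro p hp q hq
      have hd (d : ℕ) : ((N / d : ℕ) : ℝ) ≤ N * (1 / d) := by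
        rw [mul_one_div]
        exact Nat.cast_div_le
      by_cases hpq : p = q
      · subst hpq
        have : ∀ n, (if p ∣ n then (1 : ℝ) else 0) * (if p ∣ n then 1 else 0) =
            if p ∣ n then 1 else 0 := fun n => by split_ifs <;> simp
        simp only [this, hcount p (hP p hp).ne_zero, if_true]
        refine (hd p).trans (le_add_of_nonneg_left (by positivity))
      · have hco : Nat.Coprime p q := (Nat.coprime_primes (hP p hp) (hP q hq)).2 hpq
        have : ∀ n, (if p ∣ n then (1 : ℝ) else 0) * (if q ∣ n then 1 else 0) =
            if p * q ∣ n then 1 else 0 := fun n => by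
          rw [ite_zero_mul_ite_zero, mul_one]
          exact if_congr ⟨fun h => hco.mul_dvd_of_dvd_of_dvd h.1 h.2,
            fun h => ⟨(dvd_mul_right p q).trans h, (dvd_mul_left q p).trans h⟩⟩ rfl rfl
        simp only [this, hcount (p * q) (mul_ne_zero (hP p hp).ne_zero (hP q hq).ne_zero),
          if_neg hpq, add_zero]
        refine (hd _).trans_eq ?_
        push_cast
        rw [one_div_mul_one_div]
    calc ∑ n ∈ Icc 1 N, (∑ p ∈ P, if p ∣ n then (1 : ℝ) else 0) ^ 2
        = ∑ p ∈ P, ∑ q ∈ P,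
            ∑ n ∈ Icc 1 N, (if p ∣ n then (1 : ℝ) else 0) * (if q ∣ n then 1 else 0) := by
          simp_rw [sq, sum_mul_sum]
          rw [sum_comm]
          exact sum_congr rfl fun p _ => sum_comm
      _ ≤ ∑ p ∈ P, ∑ q ∈ P,
            (N * ((1 : ℝ) / p * (1 / q)) + if p = q then N * ((1 : ℝ) / p) else 0) :=
          sum_le_sum fun p hp => sum_le_sum fun q hq => hterm p hp q hq
      _ = N * L ^ 2 + N * L := by
          simp_rw [sum_add_distrib]
          congr 1
          · simp_rw [← mul_sum, ← sum_mul, sq, hL]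
          · rw [hL, mul_sum]
            refine sum_congr rfl fun p hp => ?_
            rw [sum_ite_eq, if_pos hp]
  calc ∑ n ∈ Icc 1 N, ((∑ p ∈ P, if p ∣ n then (1 : ℝ) else 0) - L) ^ 2
      = ∑ n ∈ Icc 1 N, (∑ p ∈ P, if p ∣ n then (1 : ℝ) else 0) ^ 2 -
          2 * L * (∑ n ∈ Icc 1 N, ∑ p ∈ P, if p ∣ n then (1 : ℝ) else 0) + N * L ^ 2 := by
        simp_rw [sub_sq, sum_add_distrib, sum_sub_distrib, mul_sum]
        simp only [sum_const, Nat.card_Icc, Nat.add_sub_cancel, nsmul_eq_mul]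
        congr 2
        exact sum_congr rfl fun n _ => by
          simp only [← mul_sum]
          ring
    _ ≤ N * L + 2 * L * #P := by nlinarith

/-- The bilinear estimate behind Kátai's criterion. -/
lemma norm_sq_sum_primes_le (P : Finset ℕ) (hP : ∀ p ∈ P, p.Prime) (N : ℕ) {a u : ℕ → ℂ}
    (hu : ∀ n, ‖u n‖ ≤ 1) :
    ‖∑ p ∈ P, ∑ m ∈ Icc 1 (N / p), a (p * m) * (u p * u m)‖ ^ 2 ≤
      N * ∑ p ∈ P, ∑ q ∈ P,
        ‖∑ m ∈ Icc 1 (N / max p q), a (p * m) * starRingEnd ℂ (a (q * m))‖ := by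
  let w (m : ℕ) : ℂ := ∑ p ∈ P, if p * m ≤ N then u p * a (p * m) else 0
  have hB : ∑ p ∈ P, ∑ m ∈ Icc 1 (N / p), a (p * m) * (u p * u m) =
      ∑ m ∈ Icc 1 N, u m * w m := by
    simp_rw [w, mul_sum]
    rw [sum_comm]
    refine sum_congr rfl fun p hp => ?_
    rw [← sum_Icc_ite_mul_le p N (hP p hp).ne_zero]
    refine sum_congr rfl fun m _ => ?_
    split_ifs <;> ring
  have hw : ((∑ m ∈ Icc 1 N, ‖w m‖ ^ 2 : ℝ) : ℂ) = ∑ p ∈ P, ∑ q ∈ P, u p * starRingEnd ℂ (u q) *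
      ∑ m ∈ Icc 1 (N / max p q), a (p * m) * starRingEnd ℂ (a (q * m)) := by
    have hterm (m : ℕ) : ((‖w m‖ ^ 2 : ℝ) : ℂ) = ∑ p ∈ P, ∑ q ∈ P,
        if max p q * m ≤ N then u p * starRingEnd ℂ (u q) *
          (a (p * m) * starRingEnd ℂ (a (q * m))) else 0 := by
      rw [← Complex.normSq_eq_norm_sq, ← Complex.mul_conj]
      simp only [w, map_sum, sum_mul_sum]
      refine sum_congr rfl fun p _ => sum_congr rfl fun q _ => ?_
      have : max p q * m ≤ N ↔ p * m ≤ N ∧ q * m ≤ N := by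
        rw [max_mul_of_nonneg _ _ (Nat.zero_le m), max_le_iff]
      by_cases h1 : p * m ≤ N <;> by_cases h2 : q * m ≤ N <;> simp [this, h1, h2]
      ring
    rw [Complex.ofReal_sum]
    simp_rw [hterm]
    rw [sum_comm]
    refine sum_congr rfl fun p hp => ?_
    rw [sum_comm]
    refine sum_congr rfl fun q hq => ?_
    have hne : max p q ≠ 0 := (lt_max_of_lt_left (hP p hp).pos).ne'
    rw [sum_Icc_ite_mul_le _ N hne, mul_sum]
  have hw' : ∑ m ∈ Icc 1 N, ‖w m‖ ^ 2 ≤ ∑ p ∈ P, ∑ q ∈ P,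
      ‖∑ m ∈ Icc 1 (N / max p q), a (p * m) * starRingEnd ℂ (a (q * m))‖ := by
    rw [← Complex.ofReal_re (∑ m ∈ Icc 1 N, ‖w m‖ ^ 2), hw]
    refine (Complex.re_le_norm _).trans ((norm_sum_le _ _).trans (sum_le_sum fun p _ =>
      (norm_sum_le _ _).trans (sum_le_sum fun q _ => ?_)))
    rw [norm_mul, norm_mul, RCLike.norm_conj]
    exact mul_le_of_le_one_left (norm_nonneg _) (mul_le_one₀ (hu p) (norm_nonneg _) (hu q))
  calc _ = ‖∑ m ∈ Icc 1 N, u m * w m‖ ^ 2 := by rw [hB]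
    _ ≤ (∑ m ∈ Icc 1 N, ‖w m‖) ^ 2 := by
        gcongr
        refine (norm_sum_le _ _).trans (sum_le_sum fun m _ => ?_)
        rw [norm_mul]
        exact mul_le_of_le_one_left (norm_nonneg _) (hu m)
    _ ≤ N * ∑ m ∈ Icc 1 N, ‖w m‖ ^ 2 := by
        simpa using sq_sum_le_card_mul_sum_sq (s := Icc 1 N) (f := fun m => ‖w m‖)
    _ ≤ _ := by gcongr

lemma exists_primes_sum_inv_ge (M : ℝ) :
    ∃ P : Finset ℕ, (∀ p ∈ P, p.Prime) ∧ M ≤ ∑ p ∈ P, (1 : ℝ) / p := by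
  by_contra! hcon
  refine Nat.Primes.not_summable_one_div (summable_of_sum_le (c := M) (fun _ => by positivity)
    fun s => ?_)
  have := hcon (s.map ⟨fun p : Nat.Primes => (p : ℕ), Nat.Primes.coe_nat_injective⟩) (by
    intro p hp
    obtain ⟨q, -, rfl⟩ := mem_map.1 hp
    exact q.2)
  rw [sum_map] at this
  exact this.le

/-- A multiplicative function may be replaced by `u p * u m` at `p * m` up to a small error. -/
lemma norm_sum_mul_sub_le {a u : ℕ → ℂ}
    (hu_mult : ∀ m n : ℕ, Nat.Coprime m n → u (m * n) = u m * u n)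
    (hu : ∀ n, ‖u n‖ ≤ 1) (ha : ∀ n, ‖a n‖ ≤ 1) {p : ℕ} (hp : p.Prime) (N : ℕ) :
    ‖∑ m ∈ Icc 1 (N / p), a (p * m) * u (p * m) -
      ∑ m ∈ Icc 1 (N / p), a (p * m) * (u p * u m)‖ ≤ 2 * N * (1 / (p : ℝ) ^ 2) := by
  rw [← sum_sub_distrib]
  calc _ ≤ ∑ m ∈ Icc 1 (N / p), if p ∣ m then (2 : ℝ) else 0 := by
        refine (norm_sum_le _ _).trans (sum_le_sum fun m _ => ?_)
        rw [← mul_sub, norm_mul]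
        split_ifs with hpm
        · have h1 : ‖u (p * m) - u p * u m‖ ≤ 2 := by
            refine (norm_sub_le _ _).trans ?_
            rw [norm_mul]
            linarith [hu (p * m), mul_le_one₀ (hu p) (norm_nonneg _) (hu m)]
          nlinarith [ha (p * m), norm_nonneg (a (p * m)), norm_nonneg (u (p * m) - u p * u m)]
        · rw [hu_mult p m ((Nat.Prime.coprime_iff_not_dvd hp).2 hpm), sub_self]
          simp
    _ = ((N / p / p : ℕ) : ℝ) * 2 := by
        rw [sum_Icc_ite_dvd p _ hp.ne_zero]
        simp
    _ ≤ 2 * N * (1 / (p : ℝ) ^ 2) := by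
        have : ((N / p / p : ℕ) : ℝ) ≤ N / (p : ℝ) ^ 2 := by
          rw [Nat.div_div_eq_div_mul, sq]
          exact_mod_cast Nat.cast_div_le (α := ℝ) (m := N) (n := p * p)
        rw [mul_assoc, mul_one_div]
        linarith

/-- A quantitative Kátai–Bourgain–Sarnak–Ziegler criterion. -/
lemma exists_katai_bound {u : ℕ → ℂ}
    (hu_mult : ∀ m n : ℕ, Nat.Coprime m n → u (m * n) = u m * u n)
    (hu : ∀ n, ‖u n‖ ≤ 1) {η : ℝ} (hη : 0 < η) :
    ∃ ε > 0, ∀ a : ℕ → ℂ, (∀ n, ‖a n‖ ≤ 1) →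
      (∀ p q : ℕ, p.Prime → q.Prime → p ≠ q → ∀ᶠ N : ℕ in atTop,
        ‖∑ n ∈ Icc 1 N, a (p * n) * starRingEnd ℂ (a (q * n))‖ ≤ ε * N) →
      ∀ᶠ N : ℕ in atTop, ‖∑ n ∈ Icc 1 N, a n * u n‖ ≤ η * N := by
  set C : ℝ := ∑' n : ℕ, 1 / (n : ℝ) ^ 2 with hC
  have hsumm : Summable fun n : ℕ => 1 / (n : ℝ) ^ 2 :=
    Real.summable_one_div_nat_pow.2 (by norm_num)
  have hC0 : 0 ≤ C := tsum_nonneg fun n => by positivity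
  obtain ⟨K, hK⟩ : ∃ K : ℝ, 1 ≤ K ∧ 4 * K + 2 * C ≤ η * K ^ 2 := by
    refine ⟨(4 + 2 * C) / η + 1, by linarith [div_nonneg (by linarith : 0 ≤ 4 + 2 * C) hη.le], ?_⟩
    have hx : 0 ≤ (4 + 2 * C) / η := by positivity
    have hmul : η * ((4 + 2 * C) / η) = 4 + 2 * C := by field_simp
    set x := (4 + 2 * C) / η
    nlinarith [mul_nonneg hC0 hx]
  obtain ⟨hK1, hK2⟩ := hK
  obtain ⟨P, hP, hPL⟩ := exists_primes_sum_inv_ge (K ^ 2)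
  set L : ℝ := ∑ p ∈ P, (1 : ℝ) / p with hL
  have hL1 : 1 ≤ L := le_trans (by nlinarith) hPL
  have hPne : P.Nonempty := by
    rw [nonempty_iff_ne_empty]
    rintro rfl
    simp at hL
    linarith
  have hPpos : (0 : ℝ) < #P := by exact_mod_cast hPne.card_pos
  refine ⟨1 / (#P : ℝ) ^ 2, by positivity, fun a ha hcorr => ?_⟩
  have hcorr' : ∀ᶠ N : ℕ in atTop, ∀ p ∈ P, ∀ q ∈ P, p ≠ q →
      ‖∑ m ∈ Icc 1 (N / max p q), a (p * m) * starRingEnd ℂ (a (q * m))‖ ≤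
        1 / (#P : ℝ) ^ 2 * N := by
    refine (eventually_all_finset P).2 fun p hp => (eventually_all_finset P).2 fun q hq => ?_
    by_cases hpq : p = q
    · exact .of_forall fun N h => absurd hpq h
    · have hne : max p q ≠ 0 := (lt_max_of_lt_left (hP p hp).pos).ne'
      filter_upwards [(Nat.tendsto_div_const_atTop hne).eventually
        (hcorr p q (hP p hp) (hP q hq) hpq)] with N hN _
      refine hN.trans ?_
      gcongr
      exact Nat.div_le_self _ _
  filter_upwards [hcorr', eventually_ge_atTop (2 * #P)] with N hN hN2
  have hN2' : 2 * (#P : ℝ) ≤ N := by exact_mod_cast hN2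
  have hN0 : (0 : ℝ) ≤ N := by positivity
  set ω : ℕ → ℝ := fun n => ∑ p ∈ P, if p ∣ n then (1 : ℝ) else 0 with hω
  have hTK : ‖∑ n ∈ Icc 1 N, a n * u n * ((ω n - L : ℝ) : ℂ)‖ ≤ N * √(2 * L) := by
    refine le_trans ?_ (b := ∑ n ∈ Icc 1 N, |ω n - L|) ?_
    · refine (norm_sum_le _ _).trans (sum_le_sum fun n _ => ?_)
      rw [norm_mul, norm_mul, Complex.norm_real, Real.norm_eq_abs]
      exact mul_le_of_le_one_left (abs_nonneg _) (mul_le_one₀ (ha n) (norm_nonneg _) (hu n))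
    · refine abs_le_of_sq_le_sq' ?_ (by positivity) |>.2
      rw [mul_pow, Real.sq_sqrt (by positivity)]
      have h1 := sq_sum_le_card_mul_sum_sq (s := Icc 1 N) (f := fun n => |ω n - L|)
      simp only [sq_abs, Nat.card_Icc, Nat.add_sub_cancel] at h1
      have h2 := sum_sq_card_primeDivisors_sub_le P hP N
      refine h1.trans ?_
      have h3 : N * L + 2 * L * #P ≤ N * (2 * L) := by nlinarith
      calc _ ≤ (N : ℝ) * (N * (2 * L)) := by
            gcongr
            exact h2.trans h3
        _ = _ := by ring
  have hmain : ‖∑ p ∈ P, ∑ m ∈ Icc 1 (N / p), a (p * m) * (u p * u m)‖ ≤ N * √(2 * L) := by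
    refine abs_le_of_sq_le_sq' ?_ (by positivity) |>.2
    rw [mul_pow, Real.sq_sqrt (by positivity)]
    refine (norm_sq_sum_primes_le P hP N hu).trans ?_
    rw [sq, mul_assoc]
    gcongr
    have hterm : ∀ p ∈ P, ∀ q ∈ P,
        ‖∑ m ∈ Icc 1 (N / max p q), a (p * m) * starRingEnd ℂ (a (q * m))‖ ≤
          1 / (#P : ℝ) ^ 2 * N + if p = q then N * ((1 : ℝ) / p) else 0 := by
      intro p hp q hq
      by_cases hpq : p = q
      · subst hpq
        rw [if_pos rfl, max_self]
        refine le_trans ?_ (le_add_of_nonneg_left (by positivity))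
        refine (norm_sum_le_of_le (f := fun m => a (p * m) * starRingEnd ℂ (a (p * m)))
          (n := fun _ => (1 : ℝ)) _ fun m _ => ?_).trans ?_
        · rw [norm_mul, RCLike.norm_conj]
          exact mul_le_one₀ (ha _) (norm_nonneg _) (ha _)
        · simp only [sum_const, Nat.card_Icc, Nat.add_sub_cancel, nsmul_eq_mul, mul_one,
            mul_one_div]
          exact Nat.cast_div_le
      · rw [if_neg hpq, add_zero]
        exact hN p hp q hq hpq
    calc _ ≤ ∑ p ∈ P, ∑ q ∈ P,
          (1 / (#P : ℝ) ^ 2 * N + if p = q then N * ((1 : ℝ) / p) else 0) :=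
          sum_le_sum fun p hp => sum_le_sum fun q hq => hterm p hp q hq
      _ = N + N * L := by
          simp_rw [sum_add_distrib]
          congr 1
          · simp only [sum_const, nsmul_eq_mul]
            field_simp
          · rw [hL, mul_sum]
            refine sum_congr rfl fun p hp => ?_
            rw [sum_ite_eq, if_pos hp]
      _ ≤ N * (2 * L) := by nlinarith
  have herr : ‖∑ p ∈ P, ∑ m ∈ Icc 1 (N / p), a (p * m) * u (p * m) -
      ∑ p ∈ P, ∑ m ∈ Icc 1 (N / p), a (p * m) * (u p * u m)‖ ≤ 2 * N * C := by
    rw [← sum_sub_distrib]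
    refine (norm_sum_le_of_le _ fun p hp =>
      norm_sum_mul_sub_le hu_mult hu ha (hP p hp) N).trans ?_
    rw [← mul_sum]
    gcongr
    exact hsumm.sum_le_tsum P fun n _ => by positivity
  have hsplit : (L : ℂ) * ∑ n ∈ Icc 1 N, a n * u n =
      ∑ p ∈ P, ∑ m ∈ Icc 1 (N / p), a (p * m) * u (p * m) -
        ∑ n ∈ Icc 1 N, a n * u n * ((ω n - L : ℝ) : ℂ) := by
    have hω' : ∑ p ∈ P, ∑ m ∈ Icc 1 (N / p), a (p * m) * u (p * m) =
        ∑ n ∈ Icc 1 N, a n * u n * (ω n : ℂ) := by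
      simp only [hω, Complex.ofReal_sum, mul_sum]
      rw [sum_comm]
      refine sum_congr rfl fun p hp => ?_
      rw [← sum_Icc_ite_dvd p N (hP p hp).ne_zero (fun n => a n * u n)]
      refine sum_congr rfl fun n _ => ?_
      split_ifs <;> simp
    rw [hω', ← sum_sub_distrib, mul_sum]
    refine sum_congr rfl fun n _ => ?_
    push_cast
    ring
  have hfinal : L * ‖∑ n ∈ Icc 1 N, a n * u n‖ ≤ N * (2 * √(2 * L) + 2 * C) := by
    have h1 : L * ‖∑ n ∈ Icc 1 N, a n * u n‖ = ‖(L : ℂ) * ∑ n ∈ Icc 1 N, a n * u n‖ := by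
      rw [norm_mul, Complex.norm_real, Real.norm_of_nonneg (by linarith)]
    rw [h1, hsplit]
    have h2 := norm_sub_le (∑ p ∈ P, ∑ m ∈ Icc 1 (N / p), a (p * m) * u (p * m))
      (∑ n ∈ Icc 1 N, a n * u n * ((ω n - L : ℝ) : ℂ))
    have h3 := norm_sub_norm_le (∑ p ∈ P, ∑ m ∈ Icc 1 (N / p), a (p * m) * u (p * m))
      (∑ p ∈ P, ∑ m ∈ Icc 1 (N / p), a (p * m) * (u p * u m))
    linarith
  have hKL : 2 * √(2 * L) + 2 * C ≤ η * L := by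
    have hs : √L ≥ K := Real.le_sqrt_of_sq_le hPL
    have hs2 : √L ^ 2 = L := Real.sq_sqrt (by linarith)
    have h2 : √(2 * L) ≤ 2 * √L := by
      rw [Real.sqrt_le_left (by positivity), mul_pow, hs2]
      linarith
    have hηK : 4 ≤ η * K := by
      by_contra! hlt
      nlinarith
    have h4 : 4 * √L + 2 * C ≤ η * √L ^ 2 := by
      have h5 := mul_le_mul_of_nonneg_right hηK (sub_nonneg.2 hs)
      have h6 := mul_nonneg hη.le (mul_nonneg (Real.sqrt_nonneg L) (sub_nonneg.2 hs))
      linarith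
    rw [hs2] at h4
    linarith
  have hLpos : 0 < L := by linarith
  refine le_of_mul_le_mul_left (hfinal.trans ?_) hLpos
  nlinarith

end KataiCriterion

/-- `g` is an `L¹(ν)`-limit of continuous functions whose values along the orbit of `y` are
asymptotically almost orthogonal to `u`. -/
def ApproxOrthogonal {Y : Type*} [TopologicalSpace Y] [MeasurableSpace Y] (S : Y → Y)
    (ν : Measure Y) (u : ℕ → ℂ) (y : Y) (g : Y → ℂ) : Prop :=
  ∀ δ > 0, ∃ h : Y → ℂ, Continuous h ∧ ∫ x, ‖g x - h x‖ ∂ν ≤ δ ∧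
    ∀ᶠ N : ℕ in atTop, ‖∑ n ∈ Finset.Icc 1 N, h (S^[n] y) * u n‖ ≤ δ * N

/-- A unimodular function is an `L¹`-limit of continuous functions bounded by `1`. -/
lemma exists_continuous_norm_le_one_integral_sub_le {Y : Type*} [MetricSpace Y] [CompactSpace Y]
    [MeasurableSpace Y] [BorelSpace Y] {ν : Measure Y} [IsFiniteMeasure ν] {F : Y → ℂ}
    (hF : Integrable F ν) (hn : ∀ᵐ x ∂ν, ‖F x‖ = 1) {ε : ℝ} (hε : 0 < ε) :
    ∃ g : Y → ℂ, Continuous g ∧ (∀ x, ‖g x‖ ≤ 1) ∧ ∫ x, ‖F x - g x‖ ∂ν ≤ ε := by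
  obtain ⟨h, hh, hint⟩ := hF.exists_boundedContinuous_integral_sub_le (half_pos hε)
  have hpos (x : Y) : 0 < max 1 ‖h x‖ := lt_max_of_lt_left one_pos
  let g : Y → ℂ := fun x => (max 1 ‖h x‖)⁻¹ • h x
  have hg : Continuous g :=
    ((continuous_const.max h.continuous.norm).inv₀ fun x => (hpos x).ne').smul h.continuous
  have hg1 (x : Y) : ‖g x‖ ≤ 1 := by
    rw [norm_smul, norm_inv, Real.norm_of_nonneg (hpos x).le, inv_mul_le_iff₀ (hpos x), mul_one]
    exact le_max_right _ _
  refine ⟨g, hg, hg1, ?_⟩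
  have hgint : Integrable g ν := .of_bound hg.aestronglyMeasurable 1 (.of_forall hg1)
  have hle : ∀ᵐ x ∂ν, ‖F x - g x‖ ≤ 2 * ‖F x - h x‖ := by
    filter_upwards [hn] with x hx
    have hdist : ‖h x - g x‖ ≤ ‖F x - h x‖ := by
      rcases le_total ‖h x‖ 1 with hle | hle
      · simp [g, max_eq_left hle]
      · have h0 : ‖h x‖ ≠ 0 := by linarith
        have hsub : h x - g x = (1 - ‖h x‖⁻¹) • h x := by
          simp only [g, max_eq_right hle, sub_smul, one_smul]
        rw [hsub, norm_smul, Real.norm_of_nonneg (sub_nonneg.2 (inv_le_one_of_one_le₀ hle)),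
          sub_mul, inv_mul_cancel₀ h0, one_mul, norm_sub_rev, ← hx]
        exact norm_sub_norm_le _ _
    calc ‖F x - g x‖ ≤ ‖F x - h x‖ + ‖h x - g x‖ := norm_sub_le_norm_sub_add_norm_sub _ _ _
      _ ≤ 2 * ‖F x - h x‖ := by linarith
  calc ∫ x, ‖F x - g x‖ ∂ν ≤ ∫ x, 2 * ‖F x - h x‖ ∂ν :=
        integral_mono_ae (hF.sub hgint).norm ((hF.sub hint).norm.const_mul 2) hle
    _ ≤ ε := by rw [integral_const_mul]; linarith

lemma integral_norm_le_norm_Lp_two {Y : Type*} [MeasurableSpace Y] {ν : Measure Y}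
    [IsProbabilityMeasure ν] (g : Lp ℂ 2 ν) : ∫ x, ‖g x‖ ∂ν ≤ ‖g‖ := by
  rw [integral_norm_eq_lintegral_enorm (Lp.aestronglyMeasurable g),
    ← eLpNorm_one_eq_lintegral_enorm, Lp.norm_def]
  exact ENNReal.toReal_mono (Lp.eLpNorm_ne_top g)
    (eLpNorm_le_eLpNorm_of_exponent_le (by norm_num) (Lp.aestronglyMeasurable g))

lemma Continuous.integrable_of_isFiniteMeasure {Y : Type*} [MetricSpace Y]
    [CompactSpace Y] [MeasurableSpace Y] [BorelSpace Y] {ν : Measure Y} [IsFiniteMeasure ν]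
    {h : Y → ℂ} (hh : Continuous h) : Integrable h ν :=
  (BoundedContinuousFunction.mkOfCompact ⟨h, hh⟩).integrable ν

namespace ApproxOrthogonal

section

variable {Y : Type*} [TopologicalSpace Y] [MeasurableSpace Y] {S : Y → Y} {ν : Measure Y}
  {u : ℕ → ℂ} {y : Y}

lemma congr_ae {g g' : Y → ℂ} (h : ApproxOrthogonal S ν u y g) (he : g =ᵐ[ν] g') :
    ApproxOrthogonal S ν u y g' := by
  intro δ hδ
  obtain ⟨k, hk, hi, hs⟩ := h δ hδ
  refine ⟨k, hk, le_of_eq_of_le (integral_congr_ae ?_) hi, hs⟩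
  filter_upwards [he] with x hx
  rw [hx]

lemma zero : ApproxOrthogonal S ν u y fun _ => 0 := fun δ hδ =>
  ⟨fun _ => 0, continuous_const, by simpa using hδ.le, .of_forall fun N => by simp; positivity⟩

lemma const_mul {g : Y → ℂ} (h : ApproxOrthogonal S ν u y g) (c : ℂ) :
    ApproxOrthogonal S ν u y fun x => c * g x := by
  intro δ hδ
  have hc : 0 < ‖c‖ + 1 := by positivity
  have hcδ : ‖c‖ * (δ / (‖c‖ + 1)) ≤ δ := by
    rw [mul_div_assoc', div_le_iff₀ hc]
    nlinarith
  obtain ⟨k, hk, hi, hs⟩ := h (δ / (‖c‖ + 1)) (by positivity)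
  refine ⟨fun x => c * k x, continuous_const.mul hk, ?_, ?_⟩
  · simp_rw [← mul_sub, norm_mul]
    rw [integral_const_mul]
    exact (mul_le_mul_of_nonneg_left hi (norm_nonneg c)).trans hcδ
  · filter_upwards [hs] with N hN
    simp_rw [mul_assoc, ← Finset.mul_sum]
    rw [norm_mul]
    calc _ ≤ ‖c‖ * (δ / (‖c‖ + 1) * N) := by gcongr
      _ = ‖c‖ * (δ / (‖c‖ + 1)) * N := by ring
      _ ≤ δ * N := by gcongr

end

variable {Y : Type*} [MetricSpace Y] [CompactSpace Y] [MeasurableSpace Y] [BorelSpace Y]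
  {S : Y → Y} {ν : Measure Y} {u : ℕ → ℂ} {y : Y}

lemma add [IsFiniteMeasure ν] {g g' : Y → ℂ} (hg : Integrable g ν) (hg' : Integrable g' ν)
    (h : ApproxOrthogonal S ν u y g) (h' : ApproxOrthogonal S ν u y g') :
    ApproxOrthogonal S ν u y fun x => g x + g' x := by
  intro δ hδ
  obtain ⟨k, hk, hi, hs⟩ := h (δ / 2) (half_pos hδ)
  obtain ⟨k', hk', hi', hs'⟩ := h' (δ / 2) (half_pos hδ)
  have i1 : Integrable (fun x => ‖g x - k x‖) ν :=
    (hg.sub hk.integrable_of_isFiniteMeasure).norm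
  have i2 : Integrable (fun x => ‖g' x - k' x‖) ν :=
    (hg'.sub hk'.integrable_of_isFiniteMeasure).norm
  refine ⟨fun x => k x + k' x, hk.add hk', ?_, ?_⟩
  · calc _ ≤ ∫ x, (‖g x - k x‖ + ‖g' x - k' x‖) ∂ν := by
          refine integral_mono ((hg.add hg').sub
            (hk.add hk').integrable_of_isFiniteMeasure).norm (i1.add i2) fun x => ?_
          refine le_of_eq_of_le ?_ (norm_add_le _ _)
          congr 1
          ring
      _ ≤ δ := by
          rw [integral_add i1 i2]
          linarith
  · filter_upwards [hs, hs'] with N h1 h2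
    simp_rw [add_mul, Finset.sum_add_distrib]
    refine (norm_add_le _ _).trans ?_
    linarith

lemma of_approx [IsFiniteMeasure ν] {g : Y → ℂ} (hg : Integrable g ν)
    (h : ∀ δ > 0, ∃ g', Integrable g' ν ∧ ApproxOrthogonal S ν u y g' ∧
      ∫ x, ‖g x - g' x‖ ∂ν ≤ δ) : ApproxOrthogonal S ν u y g := by
  intro δ hδ
  obtain ⟨g', hg', hA, hd⟩ := h (δ / 2) (half_pos hδ)
  obtain ⟨k, hk, hi, hs⟩ := hA (δ / 2) (half_pos hδ)
  have i1 : Integrable (fun x => ‖g x - g' x‖) ν := (hg.sub hg').norm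
  have i2 : Integrable (fun x => ‖g' x - k x‖) ν :=
    (hg'.sub hk.integrable_of_isFiniteMeasure).norm
  refine ⟨k, hk, ?_, ?_⟩
  · calc _ ≤ ∫ x, (‖g x - g' x‖ + ‖g' x - k x‖) ∂ν :=
          integral_mono (hg.sub hk.integrable_of_isFiniteMeasure).norm (i1.add i2)
            fun x => norm_sub_le_norm_sub_add_norm_sub _ _ _
      _ ≤ δ := by
          rw [integral_add i1 i2]
          linarith
  · filter_upwards [hs] with N hN
    refine hN.trans ?_
    gcongr
    linarith

lemma of_isQuasiEigen (hS : Continuous S) (huniq : UniquelyErgodicWith S ν)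
    (htot : TotallyErgodic S ν)
    (hu_mult : ∀ m n : ℕ, Nat.Coprime m n → u (m * n) = u m * u n) (hu : ∀ n, ‖u n‖ ≤ 1)
    {k : ℕ} {c : ℂ} {F : Y → ℂ} (hF : IsQuasiEigen S ν (k + 1) c F)
    (hc : ∀ n ≠ 0, c ^ n ≠ 1) : ApproxOrthogonal S ν u y F := by
  have hν := huniq.1
  intro δ hδ
  obtain ⟨ε, hε, hK⟩ := exists_katai_bound hu_mult hu hδ
  obtain ⟨g, hg, hg1, hd⟩ := exists_continuous_norm_le_one_integral_sub_le hF.integrable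
    hF.norm_eq_one (lt_min hδ (by positivity : 0 < ε / 4))
  refine ⟨g, hg, hd.trans (min_le_left _ _), hK (fun n => g (S^[n] y)) (fun n => hg1 _) ?_⟩
  intro p q hp hq hpq
  refine eventually_norm_correlation_le hS huniq htot hF hc hg hg1 ?_ y hp.ne_zero hq.ne_zero hpq
  linarith [hd.trans (min_le_right _ _)]

lemma tendsto_average (hS : Continuous S) (huniq : UniquelyErgodicWith S ν)
    (hu : ∀ n, ‖u n‖ ≤ 1) {f : Y → ℂ} (hf : Continuous f) (h : ApproxOrthogonal S ν u y f) :
    Tendsto (fun N : ℕ => (N : ℂ)⁻¹ * ∑ n ∈ Finset.Icc 1 N, f (S^[n] y) * u n) atTop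
      (nhds 0) := by
  rw [Metric.tendsto_nhds]
  intro ε hε
  obtain ⟨k, hk, hi, hs⟩ := h (ε / 4) (by positivity)
  have hav := (huniq.tendsto_average hS y
    (Complex.continuous_ofReal.comp (hf.sub hk).norm)).norm
  have hlim : ‖∫ x, ((‖f x - k x‖ : ℝ) : ℂ) ∂ν‖ < ε / 2 := by
    rw [integral_complex_ofReal, Complex.norm_real,
      Real.norm_of_nonneg (integral_nonneg fun x => norm_nonneg _)]
    linarith
  filter_upwards [hs, hav.eventually_lt_const hlim, eventually_ne_atTop 0] with N h1 h2 hN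
  have hN' : (0 : ℝ) < N := by positivity
  rw [dist_zero_right, norm_mul, norm_inv, RCLike.norm_natCast, inv_mul_lt_iff₀ hN']
  rw [norm_mul, norm_inv, RCLike.norm_natCast, inv_mul_lt_iff₀ hN'] at h2
  simp only [Function.comp_apply, Pi.sub_apply] at h2
  rw [← Complex.ofReal_sum, Complex.norm_real,
    Real.norm_of_nonneg (Finset.sum_nonneg fun _ _ => norm_nonneg _)] at h2
  have hsplit : ∑ n ∈ Finset.Icc 1 N, f (S^[n] y) * u n =
      ∑ n ∈ Finset.Icc 1 N, (f (S^[n] y) - k (S^[n] y)) * u n +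
        ∑ n ∈ Finset.Icc 1 N, k (S^[n] y) * u n := by
    rw [← Finset.sum_add_distrib]
    exact Finset.sum_congr rfl fun n _ => by ring
  have h3 : ‖∑ n ∈ Finset.Icc 1 N, (f (S^[n] y) - k (S^[n] y)) * u n‖ ≤
      ∑ n ∈ Finset.Icc 1 N, ‖f (S^[n] y) - k (S^[n] y)‖ :=
    norm_sum_le_of_le _ fun n _ => by
      rw [norm_mul]
      exact mul_le_of_le_one_right (norm_nonneg _) (hu n)
  rw [hsplit]
  have h4 := norm_add_le (∑ n ∈ Finset.Icc 1 N, (f (S^[n] y) - k (S^[n] y)) * u n)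
    (∑ n ∈ Finset.Icc 1 N, k (S^[n] y) * u n)
  nlinarith

/-- For a system with quasi-discrete spectrum every centred element of `L²` is approximately
orthogonal to a bounded multiplicative function. -/
lemma sub_integral (hS : Continuous S) (huniq : UniquelyErgodicWith S ν)
    (hqds : QuasiDiscreteSpectrum S ν)
    (hu_mult : ∀ m n : ℕ, Nat.Coprime m n → u (m * n) = u m * u n) (hu : ∀ n, ‖u n‖ ≤ 1)
    (g : Lp ℂ 2 ν) : ApproxOrthogonal S ν u y fun x => g x - ∫ x, g x ∂ν := by
  have hν := huniq.1
  obtain ⟨htot, hdense⟩ := hqds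
  have hint (g : Lp ℂ 2 ν) : Integrable g ν := (Lp.memLp g).integrable (by norm_num)
  have hint' (g : Lp ℂ 2 ν) : Integrable (fun x => g x - ∫ x, g x ∂ν) ν :=
    (hint g).sub (integrable_const _)
  have hspan : ∀ g ∈ Submodule.span ℂ
      {g : Lp ℂ 2 ν | ∃ k : ℕ, ∃ f ∈ quasiEigenfunctions S ν k, ⇑g =ᵐ[ν] f},
      ApproxOrthogonal S ν u y fun x => g x - ∫ x, g x ∂ν := by
    intro g hg
    induction hg using Submodule.span_induction with
    | mem g hg =>
      obtain ⟨k, F, hF, he⟩ := hg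
      obtain ⟨c, hc⟩ := isQuasiEigen_of_mem_quasiEigenfunctions hF
      rw [integral_congr_ae he]
      obtain ⟨b, -, hb⟩ | ⟨j, b, hb, hb'⟩ := hc.ae_const_or_irrational htot
      · refine zero.congr_ae ?_
        rw [integral_congr_ae hb]
        filter_upwards [he, hb] with x h1 h2
        simp [h1, h2]
      · refine (of_isQuasiEigen hS huniq htot hu_mult hu hb hb').congr_ae ?_
        rw [hb.integral_eq_zero (htot 1 one_ne_zero).toMeasurePreserving hb']
        filter_upwards [he] with x h1
        rw [h1, sub_zero]
    | zero =>
      refine zero.congr_ae ?_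
      simp
    | add g g' _ _ h h' =>
      refine (h.add (hint' g) (hint' g') h').congr_ae ?_
      rw [integral_congr_ae (Lp.coeFn_add g g'), integral_add' (hint g) (hint g')]
      filter_upwards [Lp.coeFn_add g g'] with x hx
      rw [hx, Pi.add_apply]
      ring
    | smul c g _ h =>
      refine (h.const_mul c).congr_ae ?_
      have he := Lp.coeFn_smul c g
      have hi : ∫ x, (c • g : Lp ℂ 2 ν) x ∂ν = c * ∫ x, g x ∂ν := by
        rw [integral_congr_ae he, ← integral_const_mul]
        rfl
      rw [hi]
      filter_upwards [he] with x hx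
      rw [hx, Pi.smul_apply, smul_eq_mul]
      ring
  refine of_approx (hint' g) fun δ hδ => ?_
  obtain ⟨g', hg', hd⟩ := Metric.dense_iff.1 hdense g (δ / 2) (half_pos hδ)
  rw [Metric.mem_ball, dist_comm, dist_eq_norm] at hg'
  refine ⟨_, hint' g', hspan g' hd, ?_⟩
  have hL1 : ∫ x, ‖g x - g' x‖ ∂ν ≤ δ / 2 := by
    refine le_trans (le_of_eq (integral_congr_ae ?_))
      ((integral_norm_le_norm_Lp_two (g - g')).trans hg'.le)
    filter_upwards [Lp.coeFn_sub g g'] with x hx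
    rw [hx, Pi.sub_apply]
  have hmean : ‖∫ x, g x ∂ν - ∫ x, g' x ∂ν‖ ≤ δ / 2 := by
    rw [← integral_sub (hint g) (hint g')]
    exact (norm_integral_le_integral_norm _).trans hL1
  have hsub : Integrable (fun x => ‖g x - g' x‖) ν := ((hint g).sub (hint g')).norm
  calc _ ≤ ∫ x, (‖g x - g' x‖ + ‖∫ x, g x ∂ν - ∫ x, g' x ∂ν‖) ∂ν := by
        refine integral_mono ((hint' g).sub (hint' g')).norm
          (hsub.add (integrable_const _)) fun x => ?_
        refine le_of_eq_of_le ?_ (norm_sub_le _ _)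
        congr 1
        ring
    _ ≤ δ := by
        rw [integral_add hsub (integrable_const _)]
        simp only [integral_const, probReal_univ, one_smul]
        linarith

end ApproxOrthogonal

/-- **Theorem 1.1.** If `S` is a uniquely ergodic continuous map of a compact metric space `Y`
whose unique invariant measure `ν` makes `(Y,ν,S)` a system with quasi-discrete spectrum, then
for every multiplicative `u : ℕ → ℂ` with `|u| ≤ 1`, every continuous `f` with `∫ f dν = 0`
and every `y ∈ Y`, `(1/N) ∑_{n ≤ N} f(Sⁿ y) u(n) → 0`. -/
theorem sarnak_quasiDiscreteSpectrum
    {Y : Type*} [MetricSpace Y] [CompactSpace Y] [MeasurableSpace Y] [BorelSpace Y]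
    (S : Y → Y) (hScont : Continuous S) (ν : Measure Y)
    (huniq : UniquelyErgodicWith S ν)
    (hqds : QuasiDiscreteSpectrum S ν)
    (u : ℕ → ℂ) (hu_mult : ∀ m n : ℕ, Nat.Coprime m n → u (m * n) = u m * u n)
    (hu_bd : ∀ n, ‖u n‖ ≤ 1)
    (f : Y → ℂ) (hf : Continuous f) (hf_int : (∫ y, f y ∂ν) = 0) (y : Y) :
    Tendsto (fun N : ℕ => (N : ℂ)⁻¹ * ∑ n ∈ Finset.Icc 1 N, f (S^[n] y) * u n)
      atTop (nhds 0) := by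
  have hν := huniq.1
  have hL : MemLp f 2 ν :=
    (BoundedContinuousFunction.mkOfCompact ⟨f, hf⟩).memLp_top.mono_exponent le_top
  have h := ApproxOrthogonal.sub_integral (y := y) hScont huniq hqds hu_mult hu_bd (hL.toLp f)
  refine (h.congr_ae ?_).tendsto_average hScont huniq hu_bd hf
  rw [integral_congr_ae hL.coeFn_toLp, hf_int]
  filter_upwards [hL.coeFn_toLp] with x hx
  rw [hx, sub_zero]
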